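/- arXiv:math/0011203 — 5 statements merged into one kernel-verified Lean document; each statement's English description precedes it below -/
import Mathlib

section
/- Let n ≥ 2, let A be a real n×n matrix that is symmetric, has nonpositive off-diagonal entries, is irreducible, and satisfies A·𝟙 = 0, and let f ∈ ℝⁿ. For each index i, let fᵢ be the vector obtained from f by subtracting the total sum f·𝟙 from the i-th coordinate (so fᵢ·𝟙 = 0). Then there exists a unique vector x ∈ ℝⁿ with A x = fᵢ and xᵢ = 0. -/
/-!
By the discrete maximum principle (`eq_of_mulVec_eq_zero`) the kernel of `A` consists of the constant
vectors, and by symmetry every vector `A x` has coordinate sum zero (`sum_mulVec_eq_zero`).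
Replace the `i`-th equation of `A x = fᵢ` by the normalization `x i = 0`. Since the coordinates of
`A x` sum to zero, the dropped equation follows from the others, so the modified square system has
trivial kernel and is therefore solvable; its solution solves the original system because both `A x`
and `fᵢ` have coordinate sum zero.
-/

/-- The maximum principle: at an index `a` where `x` is maximal, `∑ j, A a j * (x j - x a) = 0` is a
sum of nonnegative terms, so the maximum is also attained at every `b` with `A a b ≠ 0`, and
irreducibility propagates it to all indices. -/
lemma eq_of_mulVec_eq_zero {n : ℕ} {A : Matrix (Fin n) (Fin n) ℝ}
    (hoff : ∀ i j : Fin n, i ≠ j → A i j ≤ 0)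
    (hirr : ∀ S : Finset (Fin n), S.Nonempty → S ≠ Finset.univ →
      ∃ i ∈ S, ∃ j ∉ S, A i j ≠ 0)
    (hone : A.mulVec (fun _ => (1 : ℝ)) = 0)
    {x : Fin n → ℝ} (hx : A.mulVec x = 0) (i k : Fin n) : x i = x k := by
  obtain ⟨m, -, hm⟩ := Finset.exists_max_image Finset.univ x ⟨i, Finset.mem_univ i⟩
  let S : Finset (Fin n) := Finset.univ.filter fun j => x j = x m
  suffices hS : S = Finset.univ by
    have h : ∀ j, x j = x m := fun j => by
      have hj : j ∈ S := hS ▸ Finset.mem_univ j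
      simpa [S] using hj
    rw [h i, h k]
  by_contra hS
  obtain ⟨a, ha, b, hb, hab⟩ := hirr S ⟨m, by simp [S]⟩ hS
  have ha' : x a = x m := by simpa [S] using ha
  have hb' : x b ≠ x m := by simpa [S] using hb
  have h1 : ∑ j, A a j = 0 := by
    simpa [Matrix.mulVec, dotProduct] using congrFun hone a
  have h2 : ∑ j, A a j * x j = 0 := by
    simpa [Matrix.mulVec, dotProduct] using congrFun hx a
  have hsum : ∑ j, A a j * (x j - x m) = 0 := by
    simp_rw [mul_sub]
    rw [Finset.sum_sub_distrib, ← Finset.sum_mul, h1, h2]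
    ring
  have hnonneg : ∀ j ∈ Finset.univ, 0 ≤ A a j * (x j - x m) := by
    intro j hj
    rcases eq_or_ne a j with rfl | hne
    · simp [ha']
    · exact mul_nonneg_of_nonpos_of_nonpos (hoff a j hne) (sub_nonpos.2 (hm j hj))
  have hzero := (Finset.sum_eq_zero_iff_of_nonneg hnonneg).1 hsum b (Finset.mem_univ b)
  exact mul_ne_zero hab (sub_ne_zero.2 hb') hzero

lemma sum_mulVec_eq_zero {n : ℕ} {A : Matrix (Fin n) (Fin n) ℝ} (hsym : A.IsSymm)
    (hone : A.mulVec (fun _ => (1 : ℝ)) = 0) (x : Fin n → ℝ) : ∑ j, A.mulVec x j = 0 := by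
  have h : (fun _ => (1 : ℝ)) ⬝ᵥ A.mulVec x = 0 := by
    rw [Matrix.dotProduct_mulVec, ← Matrix.mulVec_transpose, hsym.eq, hone, zero_dotProduct]
  simpa [dotProduct] using h

lemma eq_of_sum_eq_of_forall_ne {n : ℕ} {u v : Fin n → ℝ} (i : Fin n)
    (hsum : ∑ j, u j = ∑ j, v j) (h : ∀ j, j ≠ i → u j = v j) : u = v := by
  funext j
  rcases eq_or_ne j i with rfl | hj
  · rw [← Finset.add_sum_erase _ _ (Finset.mem_univ j),
      ← Finset.add_sum_erase _ v (Finset.mem_univ j),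
      Finset.sum_congr rfl fun k hk => h k (Finset.ne_of_mem_erase hk)] at hsum
    exact add_right_cancel hsum
  · exact h j hj

/-- For a symmetric, irreducible real `n × n` matrix (`n ≥ 2`)
with nonpositive off-diagonal entries and `A·𝟙 = 0`, and any `f ∈ ℝⁿ` and index
`i`, there is a unique `x` with `A x = fᵢ` and `x i = 0`, where `fᵢ` is `f` with
the total sum `f·𝟙` subtracted from the `i`-th coordinate. -/
theorem stmt_3 (n : ℕ) (hn : 2 ≤ n) (A : Matrix (Fin n) (Fin n) ℝ)
    (hsym : A.IsSymm)
    (hoff : ∀ i j : Fin n, i ≠ j → A i j ≤ 0)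
    (hirr : ∀ S : Finset (Fin n), S.Nonempty → S ≠ Finset.univ →
      ∃ i ∈ S, ∃ j ∉ S, A i j ≠ 0)
    (hone : A.mulVec (fun _ => (1 : ℝ)) = 0)
    (f : Fin n → ℝ) (i : Fin n) :
    ∃! x : Fin n → ℝ,
      A.mulVec x = Function.update f i (f i - ∑ j, f j) ∧ x i = 0 := by
  have hker : ∀ x : Fin n → ℝ, A.mulVec x = 0 → x i = 0 → x = 0 := fun x hx hxi =>
    funext fun k => (eq_of_mulVec_eq_zero hoff hirr hone hx k i).trans hxi
  -- The square system whose `i`-th equation is replaced by the value of `x i`.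
  let T : (Fin n → ℝ) →ₗ[ℝ] (Fin n → ℝ) :=
    LinearMap.pi fun j => if j = i then LinearMap.proj i else LinearMap.proj j ∘ₗ A.mulVecLin
  have hTi : ∀ x, T x i = x i := fun x => by simp [T]
  have hTj : ∀ x j, j ≠ i → T x j = A.mulVec x j := fun x j hj => by simp [T, hj]
  have hinj : Function.Injective T := by
    rw [injective_iff_map_eq_zero]
    intro x hx
    refine hker x (eq_of_sum_eq_of_forall_ne i ?_ fun j hj => ?_) ?_
    · simpa using sum_mulVec_eq_zero hsym hone x
    · rw [← hTj x j hj, hx]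
    · rw [← hTi x, hx, Pi.zero_apply]
  obtain ⟨x, hx⟩ := LinearMap.injective_iff_surjective.1 hinj (Function.update f i 0)
  refine ⟨x, ⟨eq_of_sum_eq_of_forall_ne i ?_ fun j hj => ?_, ?_⟩, ?_⟩
  · rw [sum_mulVec_eq_zero hsym hone, Finset.sum_update_of_mem (Finset.mem_univ i),
      ← Finset.add_sum_erase _ f (Finset.mem_univ i), Finset.sdiff_singleton_eq_erase]
    ring
  · rw [← hTj x j hj, hx, Function.update_of_ne hj, Function.update_of_ne hj]
  · rw [← hTi x, hx, Function.update_self]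
  · rintro y ⟨hy, hyi⟩
    refine hinj (funext fun j => ?_)
    rcases eq_or_ne j i with rfl | hj
    · rw [hTi, hyi, hx, Function.update_self]
    · rw [hTj y j hj, hy, hx, Function.update_of_ne hj, Function.update_of_ne hj]
end

section
/- Let n ≥ 3 and let A be a real n×n matrix that is symmetric, has nonpositive off-diagonal entries, is irreducible, and satisfies A·𝟙 = 0. Then the diagonal entry A(n,n) is strictly positive, and the (n−1)×(n−1) Schur-complement matrix A′ defined by A′(j,k) = A(j,k) − A(j,n)·A(n,k)/A(n,n) for 1 ≤ j,k ≤ n−1 is again symmetric, has nonpositive off-diagonal entries, is irreducible, and satisfies A′·𝟙 = 0 (with 𝟙 now the all-ones vector in ℝ^{n−1}). -/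
/-!
All off-diagonal terms of `A' j k = A j k - A j n * A n k / A n n` have the same sign: `A j k ≤ 0`
and `A j n * A n k / A n n ≥ 0`, so no cancellation can occur and `A' j k < 0` as soon as
`A j k ≠ 0` or `A j n`, `A n k` are both nonzero. In graph terms, eliminating vertex `n` keeps
every edge among the remaining vertices and joins all neighbours of `n` to each other. Given a
partition of the remaining vertices into `S` and its complement, irreducibility of `A` is applied
to both parts: either some edge runs directly between them, or both contain a neighbour of `n`,
and in each case `A'` has an edge across. The row sums of `A'` vanish since elimination subtracts
multiples of the last row of `A`, whose sum is zero, and clears the last column. Finally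
`A n n > 0` since it is minus the sum of the other, nonpositive, entries of its row, one of which
is nonzero by irreducibility applied to `{n}`.
-/


/-- For a symmetric, irreducible real matrix of size `≥ 3`
(here of size `n + 1` with `n ≥ 2`) with nonpositive off-diagonal entries and
`A·𝟙 = 0`, the last diagonal entry is strictly positive, and the Schur
complement `A'` of that entry (symmetric Gaussian elimination of the last row
and column) again is symmetric, has nonpositive off-diagonal entries, is
irreducible, and satisfies `A'·𝟙 = 0`. -/
theorem stmt_6 (n : ℕ) (hn : 2 ≤ n) (A : Matrix (Fin (n + 1)) (Fin (n + 1)) ℝ)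
    (hsym : A.IsSymm)
    (hoff : ∀ i j : Fin (n + 1), i ≠ j → A i j ≤ 0)
    (hirr : ∀ S : Finset (Fin (n + 1)), S.Nonempty → S ≠ Finset.univ →
      ∃ i ∈ S, ∃ j ∉ S, A i j ≠ 0)
    (hone : A.mulVec (fun _ => (1 : ℝ)) = 0)
    (A' : Matrix (Fin n) (Fin n) ℝ)
    (hA' : ∀ j k : Fin n, A' j k =
      A j.castSucc k.castSucc -
        A j.castSucc (Fin.last n) * A (Fin.last n) k.castSucc /
          A (Fin.last n) (Fin.last n)) :
    0 < A (Fin.last n) (Fin.last n) ∧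
    A'.IsSymm ∧
    (∀ j k : Fin n, j ≠ k → A' j k ≤ 0) ∧
    (∀ S : Finset (Fin n), S.Nonempty → S ≠ Finset.univ →
      ∃ j ∈ S, ∃ k ∉ S, A' j k ≠ 0) ∧
    A'.mulVec (fun _ => (1 : ℝ)) = 0 := by
  have hrow : ∀ i, ∑ k : Fin n, A i k.castSucc + A i (Fin.last n) = 0 := by
    intro i
    have h := congrFun hone i
    simpa [Matrix.mulVec, dotProduct, Fin.sum_univ_castSucc] using h
  have hs : ∀ i j, A i j = A j i := fun i j => hsym.apply j i
  have hcol : ∀ j : Fin n, A j.castSucc (Fin.last n) ≤ 0 := fun j =>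
    hoff _ _ (Fin.castSucc_ne_last j)
  have hlast : ∀ k : Fin n, A (Fin.last n) k.castSucc ≤ 0 := fun k =>
    hoff _ _ (Fin.castSucc_ne_last k).symm
  have hpos : 0 < A (Fin.last n) (Fin.last n) := by
    obtain ⟨i, hi, j, hj, hij⟩ := hirr {Fin.last n} (Finset.singleton_nonempty _) (by
      intro h
      have h0 : (⟨0, by omega⟩ : Fin n).castSucc ∈ ({Fin.last n} : Finset (Fin (n + 1))) :=
        h ▸ Finset.mem_univ _
      exact Fin.castSucc_ne_last _ (Finset.mem_singleton.1 h0))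
    rw [Finset.mem_singleton] at hi hj
    subst hi
    obtain ⟨k, rfl⟩ := Fin.exists_castSucc_eq.2 hj
    have hlt : ∑ k : Fin n, A (Fin.last n) k.castSucc < 0 :=
      Finset.sum_neg' (fun k _ => hlast k) ⟨k, Finset.mem_univ _, lt_of_le_of_ne (hlast k) hij⟩
    linarith [hrow (Fin.last n)]
  have hquot : ∀ j k : Fin n, 0 ≤ A j.castSucc (Fin.last n) * A (Fin.last n) k.castSucc /
      A (Fin.last n) (Fin.last n) := fun j k =>
    div_nonneg (mul_nonneg_of_nonpos_of_nonpos (hcol j) (hlast k)) hpos.le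
  have hoff' : ∀ j k : Fin n, j ≠ k → A j.castSucc k.castSucc ≤ 0 := fun j k hjk =>
    hoff _ _ ((Fin.castSucc_injective n).ne hjk)
  -- An edge of `A` between remaining vertices survives the elimination.
  have hedge : ∀ j k : Fin n, j ≠ k → A j.castSucc k.castSucc ≠ 0 → A' j k ≠ 0 := by
    intro j k hjk h
    have h1 := lt_of_le_of_ne (hoff' j k hjk) h
    have h2 := hquot j k
    rw [hA']
    linarith
  -- Two distinct neighbours of the eliminated vertex become adjacent.
  have hfill : ∀ j k : Fin n, j ≠ k → A j.castSucc (Fin.last n) ≠ 0 →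
      A k.castSucc (Fin.last n) ≠ 0 → A' j k ≠ 0 := by
    intro j k hjk hj hk
    rw [hs] at hk
    have h1 := hoff' j k hjk
    have h2 := div_pos (mul_pos_of_neg_of_neg (lt_of_le_of_ne (hcol j) hj)
      (lt_of_le_of_ne (hlast k) hk)) hpos
    rw [hA']
    linarith
  -- Each nonempty set of remaining vertices has an edge of `A` leaving it, which ends either
  -- at another remaining vertex or at the eliminated one.
  have hcut : ∀ S : Finset (Fin n), S.Nonempty →
      ∃ j ∈ S, (∃ k ∉ S, A j.castSucc k.castSucc ≠ 0) ∨ A j.castSucc (Fin.last n) ≠ 0 := by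
    intro S hS
    have hl : Fin.last n ∉ S.map Fin.castSuccEmb := by simp [Fin.castSucc_ne_last]
    obtain ⟨i, hi, j, hj, hij⟩ := hirr (S.map Fin.castSuccEmb) (hS.map)
      (fun h => hl (h ▸ Finset.mem_univ _))
    obtain ⟨i, hiS, rfl⟩ := Finset.mem_map.1 hi
    refine ⟨i, hiS, ?_⟩
    induction j using Fin.lastCases with
    | last => exact Or.inr hij
    | cast k => exact Or.inl ⟨k, fun hk => hj (Finset.mem_map.2 ⟨k, hk, rfl⟩), hij⟩
  refine ⟨hpos, ?_, ?_, ?_, ?_⟩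
  · refine Matrix.IsSymm.ext fun i j => ?_
    rw [hA', hA', hs j.castSucc i.castSucc, hs j.castSucc (Fin.last n),
      hs (Fin.last n) i.castSucc, mul_comm]
  · intro j k hjk
    rw [hA']
    linarith [hoff' j k hjk, hquot j k]
  · intro S hS hS'
    obtain ⟨i, hi, ⟨k, hk, h⟩ | h⟩ := hcut S hS
    · exact ⟨i, hi, k, hk, hedge i k (fun e => hk (e ▸ hi)) h⟩
    · obtain ⟨k, hk, hk'⟩ := hcut Sᶜ (Finset.compl_ne_univ_iff_nonempty _ |>.1 (by simpa using hS'))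
      rw [Finset.mem_compl] at hk
      rcases hk' with ⟨j, hj, h'⟩ | h'
      · have hj : j ∈ S := by simpa using hj
        exact ⟨j, hj, k, hk, hedge j k (fun e => hk (e ▸ hj)) (by rwa [hs])⟩
      · exact ⟨i, hi, k, hk, hfill i k (fun e => hk (e ▸ hi)) h h'⟩
  · funext j
    have h1 := hrow j.castSucc
    have h2 : ∑ k : Fin n, A (Fin.last n) k.castSucc = -A (Fin.last n) (Fin.last n) := by
      linarith [hrow (Fin.last n)]
    simp only [Matrix.mulVec, dotProduct, mul_one, hA', Finset.sum_sub_distrib, Pi.zero_apply]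
    rw [← Finset.sum_div, ← Finset.mul_sum, h2, mul_neg, neg_div, mul_div_cancel_right₀ _ hpos.ne']
    linarith
end

section
/- Let G be a connected simple graph on a finite vertex set V with at least 2 vertices. Suppose H : V × V → ℝ satisfies H(i,i) = 0 for every vertex i, and for all vertices j ≠ i the harmonic recurrence deg(j)·H(j,i) = deg(j) + Σ_{k adjacent to j} H(k,i). Then for all vertices i, j, k: H(i,j) + H(j,k) + H(k,i) = H(j,i) + H(k,j) + H(i,k) (the Coppersmith–Tetali–Winkler identity). -/
/-!
Write `hᵢ(x) = H(x, i)`, let `L` be the graph Laplacian, `d` the degree function and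
`D = ∑ₓ d(x) > 0`. The recurrence says that `L hᵢ` agrees with `d` away from `i`; as `L` is
symmetric and kills constants, the entries of `L hᵢ` sum to zero, which forces `L hᵢ = d - D δᵢ`
(`lap_hitting`). Green's identity `⟨hⱼ, L hᵢ⟩ = ⟨hᵢ, L hⱼ⟩` then becomes
`D (H(j,i) - H(i,j)) = Sᵢ - Sⱼ` with `Sᵢ = ∑ₓ d(x) H(x,i)` (`hitting_sub_hitting`).
Hence `H(j,i) - H(i,j)` is a difference of potentials, and its sum around the cycle
`i, j, k` vanishes.
-/

open Matrix in
/-- Green's identity: the graph Laplacian is self-adjoint. -/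
theorem green {V : Type*} [Fintype V] [DecidableEq V]
    (G : SimpleGraph V) [DecidableRel G.Adj] (f g : V → ℝ) :
    f ⬝ᵥ (G.lapMatrix ℝ *ᵥ g) = g ⬝ᵥ (G.lapMatrix ℝ *ᵥ f) := by
  rw [dotProduct_mulVec, ← mulVec_transpose, (G.isSymm_lapMatrix (R := ℝ)).eq, dotProduct_comm]

open Matrix in
theorem lap_hitting {V : Type*} [Fintype V] [DecidableEq V]
    (G : SimpleGraph V) [DecidableRel G.Adj] (i : V) (h : V → ℝ)
    (hrec : ∀ j : V, j ≠ i →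
      (G.degree j : ℝ) * h j = (G.degree j : ℝ) + ∑ k ∈ G.neighborFinset j, h k) :
    G.lapMatrix ℝ *ᵥ h =
      fun x => (G.degree x : ℝ) - if x = i then ∑ y, (G.degree y : ℝ) else 0 := by
  have hoff : ∀ x, x ≠ i → (G.lapMatrix ℝ *ᵥ h) x = G.degree x := by
    intro x hx
    rw [SimpleGraph.lapMatrix_mulVec_apply, hrec x hx]
    ring
  have hsum : ∑ x, (G.lapMatrix ℝ *ᵥ h) x = 0 := by
    have := green G (fun _ => 1) h
    rw [SimpleGraph.lapMatrix_mulVec_const_eq_zero, dotProduct_zero] at this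
    simpa [dotProduct] using this
  funext x
  by_cases hx : x = i
  · subst hx
    rw [← Finset.add_sum_erase _ _ (Finset.mem_univ x),
      Finset.sum_congr rfl (fun y hy => hoff y (Finset.ne_of_mem_erase hy))] at hsum
    rw [if_pos rfl, ← Finset.add_sum_erase _ _ (Finset.mem_univ x)]
    linarith
  · simp [hoff x hx, hx]

theorem hitting_sub_hitting {V : Type*} [Fintype V] [DecidableEq V]
    (G : SimpleGraph V) [DecidableRel G.Adj] (H : V × V → ℝ)
    (hrec : ∀ i j : V, j ≠ i →
      (G.degree j : ℝ) * H (j, i) =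
        (G.degree j : ℝ) + ∑ k ∈ G.neighborFinset j, H (k, i)) (i j : V) :
    (∑ y, (G.degree y : ℝ)) * (H (j, i) - H (i, j)) =
      ∑ x, H (x, i) * G.degree x - ∑ x, H (x, j) * G.degree x := by
  have h := green G (fun x => H (x, i)) (fun x => H (x, j))
  rw [lap_hitting G i _ (hrec i), lap_hitting G j _ (hrec j)] at h
  simp only [dotProduct, mul_sub, Finset.sum_sub_distrib, mul_ite, mul_zero,
    Finset.sum_ite_eq', Finset.mem_univ, if_true] at h
  linarith

/-- The Coppersmith–Tetali–Winkler identity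
`H(i,j) + H(j,k) + H(k,i) = H(j,i) + H(k,j) + H(i,k)` for any function `H`
satisfying the defining equations of hitting times of the simple random walk on
a finite connected simple graph with at least two vertices. -/
theorem stmt_10 {V : Type*} [Fintype V] [DecidableEq V]
    (G : SimpleGraph V) [DecidableRel G.Adj]
    (hconn : G.Connected) (hcard : 2 ≤ Fintype.card V)
    (H : V × V → ℝ)
    (hdiag : ∀ i : V, H (i, i) = 0)
    (hrec : ∀ i j : V, j ≠ i →
      (G.degree j : ℝ) * H (j, i) =
        (G.degree j : ℝ) + ∑ k ∈ G.neighborFinset j, H (k, i)) :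
    ∀ i j k : V,
      H (i, j) + H (j, k) + H (k, i) = H (j, i) + H (k, j) + H (i, k) := by
  intro i j k
  have : Nontrivial V := Fintype.one_lt_card_iff_nontrivial.mp hcard
  have hD : 0 < ∑ y, (G.degree y : ℝ) :=
    Finset.sum_pos (fun y _ => by exact_mod_cast hconn.preconnected.degree_pos_of_nontrivial y)
      ⟨i, Finset.mem_univ i⟩
  have h1 := hitting_sub_hitting G H hrec i j
  have h2 := hitting_sub_hitting G H hrec j k
  have h3 := hitting_sub_hitting G H hrec k i
  apply mul_left_cancel₀ hD.ne'
  linarith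
end

section
/- Let G be a connected simple graph on a finite vertex set V with at least 2 vertices. Suppose H : V × V → ℝ satisfies H(i,i) = 0 for every vertex i, and for all vertices j ≠ i the harmonic recurrence deg(j)·H(j,i) = deg(j) + Σ_{k adjacent to j} H(k,i). Define the return time R(i) := 1 + (1/deg(i))·Σ_{k adjacent to i} H(k,i). Then R(i) = 2m/deg(i) for every vertex i, where m is the number of edges of G. -/
/-!
Summing the recurrence over all starting vertices `j` makes the unknown hitting times cancel:
by symmetry of adjacency (`sum_neighborFinset_eq_sum_degree_mul`) the neighbour sums of `H(·, i)`
total `∑ j, deg j * H(j, i)`, the same as the left-hand sides. The recurrence fails only at `j = i`,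
where its defect is `deg i + ∑_{k ~ i} H(k, i) = deg i * R i`; hence this defect equals
`∑ j, deg j = 2m`. Connectedness enters only to ensure `deg i ≠ 0`.
-/

/-- Double counting over adjacent ordered pairs. -/
lemma sum_neighborFinset_eq_sum_degree_mul {V : Type*} [Fintype V]
    (G : SimpleGraph V) [DecidableRel G.Adj] (f : V → ℝ) :
    ∑ j, ∑ k ∈ G.neighborFinset j, f k = ∑ k, (G.degree k : ℝ) * f k := by
  rw [Finset.sum_comm' (t' := Finset.univ) (s' := fun k => G.neighborFinset k)
    (by intro x y; simp [G.adj_comm])]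
  simp

/-- For any function `H` satisfying the defining equations of
hitting times of the simple random walk on a finite connected simple graph with
at least two vertices and `m` edges, the return time
`R(i) := 1 + (1/deg(i))·Σ_{k ~ i} H(k,i)` equals `2m / deg(i)`. -/
theorem stmt_12 {V : Type*} [Fintype V] [DecidableEq V]
    (G : SimpleGraph V) [DecidableRel G.Adj]
    (hconn : G.Connected) (hcard : 2 ≤ Fintype.card V)
    (H : V × V → ℝ)
    (hdiag : ∀ i : V, H (i, i) = 0)
    (hrec : ∀ i j : V, j ≠ i →
      (G.degree j : ℝ) * H (j, i) =
        (G.degree j : ℝ) + ∑ k ∈ G.neighborFinset j, H (k, i))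
    (R : V → ℝ)
    (hR : ∀ i : V, R i =
      1 + (1 / (G.degree i : ℝ)) * ∑ k ∈ G.neighborFinset i, H (k, i)) :
    ∀ i : V, R i = 2 * (G.edgeFinset.card : ℝ) / (G.degree i : ℝ) := by
  intro i
  have : Nontrivial V := Fintype.one_lt_card_iff_nontrivial.mp hcard
  have hdeg : (G.degree i : ℝ) ≠ 0 :=
    Nat.cast_ne_zero.mpr (hconn.preconnected.degree_pos_of_nontrivial i).ne'
  have hsum : ∑ j, (G.degree j : ℝ) = 2 * (G.edgeFinset.card : ℝ) := by
    exact_mod_cast G.sum_degrees_eq_twice_card_edges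
  -- The recurrence at every vertex, with its defect at `j = i` made explicit.
  have hall : ∀ j, (G.degree j : ℝ) * H (j, i) =
      (G.degree j : ℝ) + ∑ k ∈ G.neighborFinset j, H (k, i)
        - if j = i then (G.degree i : ℝ) + ∑ k ∈ G.neighborFinset i, H (k, i) else 0 := by
    intro j
    by_cases h : j = i
    · subst h
      simp [hdiag]
    · simp [h, hrec i j h]
  have key := Finset.sum_congr (rfl : (Finset.univ : Finset V) = Finset.univ) fun j _ => hall j
  rw [Finset.sum_sub_distrib, Finset.sum_add_distrib,
    sum_neighborFinset_eq_sum_degree_mul G fun k => H (k, i), hsum,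
    Finset.sum_ite_eq' Finset.univ i, if_pos (Finset.mem_univ i)] at key
  rw [hR i]
  field_simp
  linarith
end

section
/- Let G be a connected simple graph on a finite vertex set V with at least 2 vertices. Then there exists a unique function H : V × V → ℝ such that H(i,i) = 0 for every vertex i, and deg(j)·H(j,i) = deg(j) + Σ_{k adjacent to j} H(k,i) for all vertices j ≠ i. -/
/-!
Fix the target `i`. The equations for the column `f = H(·, i)` form a square linear system: its
operator replaces the row `i` of the Laplacian `L` by evaluation at `i`. If `f` lies in the kernel,
then `f i = 0` and `(L f) j = 0` for `j ≠ i`, so every term of `fᵀ L f = ∑ j, f j * (L f) j`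
vanishes. As `fᵀ L f` is the Dirichlet energy of `f`, connectedness makes `f` constant, hence zero.
So the operator is injective, and by finite dimensionality bijective, which gives
existence and uniqueness one column at a time.
-/

/-- The Laplacian of `G` with the row `i` replaced by evaluation at `i` (the Dirichlet condition). -/
noncomputable def groundedLaplacian {V : Type*} [Fintype V] [DecidableEq V]
    (G : SimpleGraph V) [DecidableRel G.Adj] (i : V) : (V → ℝ) →ₗ[ℝ] (V → ℝ) :=
  LinearMap.pi fun j =>
    if j = i then LinearMap.proj i else LinearMap.proj j ∘ₗ (G.lapMatrix ℝ).mulVecLin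

lemma groundedLaplacian_self {V : Type*} [Fintype V] [DecidableEq V]
    (G : SimpleGraph V) [DecidableRel G.Adj] (i : V) (f : V → ℝ) :
    groundedLaplacian G i f i = f i := by
  simp [groundedLaplacian]

lemma groundedLaplacian_of_ne {V : Type*} [Fintype V] [DecidableEq V]
    (G : SimpleGraph V) [DecidableRel G.Adj] {i j : V} (hj : j ≠ i) (f : V → ℝ) :
    groundedLaplacian G i f j = (G.lapMatrix ℝ).mulVec f j := by
  simp [groundedLaplacian, hj]

lemma groundedLaplacian_injective {V : Type*} [Fintype V] [DecidableEq V]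
    (G : SimpleGraph V) [DecidableRel G.Adj] (hconn : G.Connected) (i : V) :
    Function.Injective (groundedLaplacian G i) := by
  rw [injective_iff_map_eq_zero]
  intro f hf
  have hi : f i = 0 := by rw [← groundedLaplacian_self G i f, hf, Pi.zero_apply]
  have henergy : Matrix.toLinearMap₂' ℝ (G.lapMatrix ℝ) f f = 0 := by
    rw [Matrix.toLinearMap₂'_apply']
    refine Finset.sum_eq_zero fun j _ => ?_
    by_cases hj : j = i
    · rw [hj, hi, zero_mul]
    · rw [← groundedLaplacian_of_ne G hj f, hf, Pi.zero_apply, mul_zero]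
  rw [SimpleGraph.lapMatrix_toLinearMap₂'_apply'_eq_zero_iff_forall_reachable] at henergy
  funext j
  rw [henergy j i (hconn.preconnected j i), hi, Pi.zero_apply]

/-- The hitting-time equations with target `i`: the right-hand side vanishes at `i` and is `deg`
elsewhere. -/
lemma groundedLaplacian_eq_iff {V : Type*} [Fintype V] [DecidableEq V]
    (G : SimpleGraph V) [DecidableRel G.Adj] (i : V) (f : V → ℝ) :
    groundedLaplacian G i f = (fun j => if j = i then 0 else (G.degree j : ℝ)) ↔
      f i = 0 ∧ ∀ j, j ≠ i →
        (G.degree j : ℝ) * f j = (G.degree j : ℝ) + ∑ k ∈ G.neighborFinset j, f k := by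
  rw [funext_iff]
  constructor
  · intro h
    refine ⟨by simpa [groundedLaplacian_self] using h i, fun j hj => ?_⟩
    have := h j
    rw [groundedLaplacian_of_ne G hj, SimpleGraph.lapMatrix_mulVec_apply, if_neg hj] at this
    linarith
  · rintro ⟨hi, h⟩ j
    by_cases hj : j = i
    · rw [hj, groundedLaplacian_self, hi, if_pos rfl]
    · rw [groundedLaplacian_of_ne G hj, SimpleGraph.lapMatrix_mulVec_apply, if_neg hj, h j hj]
      ring


/-- On a finite connected simple graph with at least two
vertices, there is a unique function `H : V × V → ℝ` satisfying the defining
equations of the hitting times of the simple random walk: `H(i,i) = 0` and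
`deg(j)·H(j,i) = deg(j) + Σ_{k ~ j} H(k,i)` for `j ≠ i`. -/
theorem stmt_13 {V : Type*} [Fintype V] [DecidableEq V]
    (G : SimpleGraph V) [DecidableRel G.Adj]
    (hconn : G.Connected) (hcard : 2 ≤ Fintype.card V) :
    ∃! H : V × V → ℝ,
      (∀ i : V, H (i, i) = 0) ∧
      (∀ i j : V, j ≠ i →
        (G.degree j : ℝ) * H (j, i) =
          (G.degree j : ℝ) + ∑ k ∈ G.neighborFinset j, H (k, i)) := by
  have hinj := groundedLaplacian_injective G hconn
  have hsurj (i : V) : Function.Surjective (groundedLaplacian G i) :=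
    LinearMap.injective_iff_surjective.mp (hinj i)
  choose F hF using fun i => hsurj i fun j => if j = i then 0 else (G.degree j : ℝ)
  refine ⟨fun p => F p.2 p.1, ⟨fun i => ?_, fun i => ?_⟩, ?_⟩
  · exact ((groundedLaplacian_eq_iff G i (F i)).mp (hF i)).1
  · exact ((groundedLaplacian_eq_iff G i (F i)).mp (hF i)).2
  · rintro H ⟨hdiag, hoff⟩
    funext ⟨j, i⟩
    have hcol : (fun k => H (k, i)) = F i :=
      hinj i (((groundedLaplacian_eq_iff G i _).mpr ⟨hdiag i, hoff i⟩).trans (hF i).symm)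
    exact congrFun hcol j
end
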